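/- Let d = 2 and let X be a standard random walk perturbed on a finite set A ⊂ Z^2 (with transition probabilities given by ξ outside A and by η^{(x)} from x ∈ A), with E[ξ] = (0,0), E[|ξ|^2] < ∞, Condition B in force, and max_{x∈A} P{|η^{(x)}| > t} = o(1/log t) as t → ∞. Fix u ∈ A, v ∈ Z^2 \ A, l ∈ N and distinct points v_1, …, v_{l−1} ∈ A \ {u}. Let X̃ be a Markov chain with X̃(0) distributed as X(0), whose transition probabilities from points x ∉ A coincide with those of X (i.e. P{X̃(1) = y | X̃(0) = x} = P{ξ = y − x}), and which jumps deterministically to v from every point of A. Then for all c > 0 and all n ∈ N, P{ Σ_{k=0}^{n} 1{X(k)=u, X(k+1)=v_1, …, X(k+l−1)=v_{l−1}, X(k+l)=v} > c } ≤ P{ Σ_{k=0}^{n} 1{X̃(k) ∈ A} > c }. -/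

import Mathlib

open MeasureTheory ProbabilityTheory Filter
open scoped Classical

/-- Euclidean norm of a point of `ℤ × ℤ` (viewed inside `ℝ²`). -/
noncomputable def nrm2 (z : ℤ × ℤ) : ℝ := Real.sqrt ((z.1 : ℝ) ^ 2 + (z.2 : ℝ) ^ 2)

/-!
Both probabilities are compared with one explicit function, the probability that the auxiliary chain
started at `x` makes at least `m` visits to `A` before time `N`.

The points `v₁, …, v_{l-1}` differ from `u`, so occurrences of the pattern do not overlap: after an
occurrence started at `k`, the walk visits `v` before the next occurrence starts. Hence `m`
occurrences force the walk to visit `A`, then `v`, then `A`, and so on, with `m` visits to `A`. The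
auxiliary chain does the same, except that it goes from `A` to `v` in a single step, whereas the
walk may lose time there. Outside `A` the two chains move alike, and more time means more visits, so
one-step analysis bounds the alternations of the walk by the visits of the auxiliary chain.
-/

open scoped ENNReal

/-- The event that the process `Z` follows the path `p` up to and including time `n`; it is the past
on which transition probabilities are conditioned. -/
def pathEvent {Ω S : Type*} (Z : ℕ → Ω → S) (n : ℕ) (p : ℕ → S) : Set Ω :=
  {ω | ∀ i ≤ n, Z i ω = p i}

/-- Whenever the process `Z` is at a point `x ∈ D`, its next position has law `K x`, whatever its
past; nothing is required at the points outside `D`. With `D = Set.univ` this is the Markov property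
with transition probabilities `K`, expressed by elementary conditional probabilities. -/
def HasTransitionsOn {Ω S : Type*} [MeasurableSpace Ω] (μ : Measure Ω) (Z : ℕ → Ω → S) (D : Set S)
    (K : S → S → ℝ≥0∞) : Prop :=
  ∀ (n : ℕ) (p : ℕ → S) (y : S), p n ∈ D → μ (pathEvent Z n p) ≠ 0 →
    μ[{ω | Z (n + 1) ω = y} | pathEvent Z n p] = K (p n) y

section PathEvent

variable {Ω S : Type*} {Z : ℕ → Ω → S}

lemma pathEvent_zero (p : ℕ → S) : pathEvent Z 0 p = {ω | Z 0 ω = p 0} := by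
  simp [pathEvent]

lemma pathEvent_succ_update (n : ℕ) (p : ℕ → S) (y : S) :
    pathEvent Z (n + 1) (Function.update p (n + 1) y) =
      {ω | Z (n + 1) ω = y} ∩ pathEvent Z n p := by
  ext ω
  simp only [pathEvent, Set.mem_ofPred_eq, Set.mem_inter_iff, Nat.le_succ_iff, or_imp, forall_and,
    forall_eq, Function.update_self, and_comm (a := Z (n + 1) ω = y)]
  refine and_congr_left fun _ ↦ forall₂_congr fun i hi ↦ ?_
  rw [Function.update_of_ne (by omega)]

lemma pathEvent_inter_congr {n : ℕ} {p : ℕ → S} {Q R : Ω → Prop}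
    (h : ∀ ω, Z n ω = p n → (Q ω ↔ R ω)) :
    pathEvent Z n p ∩ {ω | Q ω} = pathEvent Z n p ∩ {ω | R ω} :=
  Set.ext fun ω ↦ and_congr_right fun hω ↦ h ω (hω n le_rfl)

variable [MeasurableSpace Ω] {μ : Measure Ω} [MeasurableSpace S] [MeasurableSingletonClass S]

lemma measurableSet_pathEvent (hZ : ∀ n, Measurable (Z n)) (n : ℕ) (p : ℕ → S) :
    MeasurableSet (pathEvent Z n p) := by
  simp only [pathEvent, Set.ofPred_forall]
  exact .iInter fun i ↦ .iInter fun _ ↦ hZ i (measurableSet_singleton (p i))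

namespace HasTransitionsOn

variable [IsFiniteMeasure μ] {D : Set S} {K : S → S → ℝ≥0∞} {n : ℕ} {p : ℕ → S} {f : S → ℝ≥0∞}

lemma measure_pathEvent_succ (hK : HasTransitionsOn μ Z D K) (hZ : ∀ n, Measurable (Z n))
    (hp : p n ∈ D) (y : S) :
    μ (pathEvent Z (n + 1) (Function.update p (n + 1) y)) = μ (pathEvent Z n p) * K (p n) y := by
  rw [pathEvent_succ_update, Set.inter_comm]
  by_cases hnull : μ (pathEvent Z n p) = 0
  · rw [hnull, zero_mul]
    exact measure_mono_null Set.inter_subset_left hnull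
  · rw [← hK n p y hp hnull, mul_comm, cond_mul_eq_inter (measurableSet_pathEvent hZ n p)]

lemma tsum_measure_pathEvent_succ_mul (hK : HasTransitionsOn μ Z D K)
    (hZ : ∀ n, Measurable (Z n)) (hp : p n ∈ D) :
    ∑' y, μ (pathEvent Z (n + 1) (Function.update p (n + 1) y)) * f y =
      μ (pathEvent Z n p) * ∑' y, K (p n) y * f y := by
  simp only [hK.measure_pathEvent_succ hZ hp, mul_assoc, ENNReal.tsum_mul_left]

end HasTransitionsOn

variable [Countable S]

lemma measure_eq_tsum_fiber_inter {f : Ω → S} (hf : Measurable f) (E : Set Ω) :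
    μ E = ∑' y, μ ({ω | f ω = y} ∩ E) := by
  have hfiber (y : S) : MeasurableSet (f ⁻¹' {y}) := hf (measurableSet_singleton y)
  calc μ E = μ.restrict E (⋃ y, f ⁻¹' {y}) := by
        rw [← Set.preimage_iUnion, Set.iUnion_of_singleton, Set.preimage_univ,
          Measure.restrict_apply_univ]
    _ = ∑' y, μ.restrict E (f ⁻¹' {y}) := measure_iUnion (pairwise_disjoint_fiber f) hfiber
    _ = ∑' y, μ ({ω | f ω = y} ∩ E) := tsum_congr fun y ↦ Measure.restrict_apply (hfiber y)

lemma measure_pathEvent_inter_eq_tsum (hZ : ∀ n, Measurable (Z n)) (n : ℕ) (p : ℕ → S)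
    (E : Set Ω) :
    μ (pathEvent Z n p ∩ E) =
      ∑' y, μ (pathEvent Z (n + 1) (Function.update p (n + 1) y) ∩ E) := by
  simp only [measure_eq_tsum_fiber_inter (hZ (n + 1)) (pathEvent Z n p ∩ E),
    pathEvent_succ_update, Set.inter_assoc]

lemma measure_pathEvent_inter_le_const_of_succ (hZ : ∀ n, Measurable (Z n)) {n : ℕ} {E : Set Ω}
    {r : ℝ≥0∞} (hE : ∀ q, μ (pathEvent Z (n + 1) q ∩ E) ≤ μ (pathEvent Z (n + 1) q) * r)
    (p : ℕ → S) :
    μ (pathEvent Z n p ∩ E) ≤ μ (pathEvent Z n p) * r := by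
  have htotal := measure_pathEvent_inter_eq_tsum (μ := μ) hZ n p Set.univ
  simp only [Set.inter_univ] at htotal
  rw [measure_pathEvent_inter_eq_tsum hZ, htotal, ← ENNReal.tsum_mul_right]
  exact ENNReal.tsum_le_tsum fun y ↦ hE _

namespace HasTransitionsOn

variable [IsFiniteMeasure μ] {D : Set S} {K : S → S → ℝ≥0∞} {n : ℕ} {p : ℕ → S} {f : S → ℝ≥0∞}
  {E : Set Ω}

lemma measure_pathEvent_inter_le_of_succ (hK : HasTransitionsOn μ Z D K)
    (hZ : ∀ n, Measurable (Z n)) (hp : p n ∈ D)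
    (hE : ∀ q, μ (pathEvent Z (n + 1) q ∩ E) ≤ μ (pathEvent Z (n + 1) q) * f (q (n + 1))) :
    μ (pathEvent Z n p ∩ E) ≤ μ (pathEvent Z n p) * ∑' y, K (p n) y * f y := by
  rw [← hK.tsum_measure_pathEvent_succ_mul hZ hp, measure_pathEvent_inter_eq_tsum hZ]
  exact ENNReal.tsum_le_tsum fun y ↦ by simpa using hE (Function.update p (n + 1) y)

lemma measure_pathEvent_inter_eq_of_succ (hK : HasTransitionsOn μ Z D K)
    (hZ : ∀ n, Measurable (Z n)) (hp : p n ∈ D)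
    (hE : ∀ q, μ (pathEvent Z (n + 1) q ∩ E) = μ (pathEvent Z (n + 1) q) * f (q (n + 1))) :
    μ (pathEvent Z n p ∩ E) = μ (pathEvent Z n p) * ∑' y, K (p n) y * f y := by
  rw [← hK.tsum_measure_pathEvent_succ_mul hZ hp, measure_pathEvent_inter_eq_tsum hZ]
  exact tsum_congr fun y ↦ by simpa using hE (Function.update p (n + 1) y)

end HasTransitionsOn

end PathEvent

/-- `auxVisitProb A v P N m x` is the probability that the auxiliary chain, with transition
probabilities `P` outside `A` and deterministic jumps to `v` from `A`, started at `x`, visits `A` at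
least `m` times during `[0, N)`. It is defined by its one-step recursion; see
`measure_pathEvent_inter_visits_eq` for the probabilistic meaning. -/
noncomputable def auxVisitProb {S : Type*} (A : Set S) (v : S) (P : S → S → ℝ≥0∞) :
    ℕ → ℕ → S → ℝ≥0∞
  | _, 0, _ => 1
  | 0, _ + 1, _ => 0
  | N + 1, m + 1, x =>
    if x ∈ A then auxVisitProb A v P N m v else ∑' y, P x y * auxVisitProb A v P N (m + 1) y

/-- The number of visits to `A` during `[j, j + N)` of the path `w` when, after each visit to `A`
that is counted, the next one is counted only after a visit to `v`. The flag tells whether the path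
has to visit `v` first. -/
noncomputable def alternationCount {S : Type*} (A : Set S) (v : S) (w : ℕ → S) :
    Bool → ℕ → ℕ → ℕ
  | _, 0, _ => 0
  | false, N + 1, j =>
    if w j ∈ A then alternationCount A v w true N (j + 1) + 1
    else alternationCount A v w false N (j + 1)
  | true, N + 1, j =>
    if w j = v then alternationCount A v w false N (j + 1)
    else alternationCount A v w true N (j + 1)

/-- From time `j` on, the path `w` visits `v` before any time satisfying `marked`. -/
def VisitsBeforeMark {S : Type*} (v : S) (w : ℕ → S) (marked : ℕ → Prop) (j : ℕ) : Prop :=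
  ∃ t ≥ j, w t = v ∧ ∀ i ∈ Set.Ico j t, ¬ marked i

section Deterministic

variable {S : Type*} {A : Set S} {v : S} {P : S → S → ℝ≥0∞} {w : ℕ → S} {marked : ℕ → Prop}
  {N m j : ℕ} {x : S}

lemma auxVisitProb_zero_right : auxVisitProb A v P N 0 x = 1 := by
  cases N <;> rw [auxVisitProb]

lemma auxVisitProb_zero_succ : auxVisitProb A v P 0 (m + 1) x = 0 := by
  rw [auxVisitProb]

lemma auxVisitProb_succ_of_mem (hx : x ∈ A) :
    auxVisitProb A v P (N + 1) (m + 1) x = auxVisitProb A v P N m v := by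
  rw [auxVisitProb, if_pos hx]

lemma auxVisitProb_succ_of_notMem (hx : x ∉ A) :
    auxVisitProb A v P (N + 1) (m + 1) x = ∑' y, P x y * auxVisitProb A v P N (m + 1) y := by
  rw [auxVisitProb, if_neg hx]

lemma auxVisitProb_le_succ : auxVisitProb A v P N m x ≤ auxVisitProb A v P (N + 1) m x := by
  induction N generalizing m x with
  | zero => cases m <;> simp [auxVisitProb_zero_right, auxVisitProb_zero_succ]
  | succ N ih =>
    rcases m with _ | m
    · simp only [auxVisitProb_zero_right, le_refl]
    · by_cases hx : x ∈ A
      · simpa only [auxVisitProb_succ_of_mem hx] using ih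
      · simp only [auxVisitProb_succ_of_notMem hx]
        gcongr
        exact ih

lemma alternationCount_zero (b : Bool) : alternationCount A v w b 0 j = 0 := by
  cases b <;> rw [alternationCount]

lemma alternationCount_false_of_mem (hj : w j ∈ A) :
    alternationCount A v w false (N + 1) j = alternationCount A v w true N (j + 1) + 1 := by
  rw [alternationCount, if_pos hj]

lemma alternationCount_false_of_notMem (hj : w j ∉ A) :
    alternationCount A v w false (N + 1) j = alternationCount A v w false N (j + 1) := by
  rw [alternationCount, if_neg hj]

lemma alternationCount_true_of_ne (hj : w j ≠ v) :
    alternationCount A v w true (N + 1) j = alternationCount A v w true N (j + 1) := by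
  rw [alternationCount, if_neg hj]

lemma alternationCount_true_of_eq (hv : v ∉ A) (hj : w j = v) :
    alternationCount A v w true (N + 1) j = alternationCount A v w false (N + 1) j := by
  rw [alternationCount_false_of_notMem (hj ▸ hv), alternationCount, if_pos hj]

lemma count_window_succ (Q : ℕ → Prop) [DecidablePred Q] (j N : ℕ) :
    Nat.count (fun k ↦ Q (j + k)) (N + 1) =
      Nat.count (fun k ↦ Q (j + 1 + k)) N + if Q j then 1 else 0 := by
  simp only [Nat.count_succ', Nat.add_zero, Nat.add_assoc, Nat.add_comm 1]

lemma VisitsBeforeMark.not_marked (h : VisitsBeforeMark v w marked j) (hj : w j ≠ v) :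
    ¬ marked j := by
  obtain ⟨t, hjt, htv, hmarked⟩ := h
  exact hmarked j ⟨le_rfl, hjt.lt_of_ne fun e ↦ hj (e ▸ htv)⟩

lemma VisitsBeforeMark.succ (h : VisitsBeforeMark v w marked j) (hj : w j ≠ v) :
    VisitsBeforeMark v w marked (j + 1) := by
  obtain ⟨t, hjt, htv, hmarked⟩ := h
  exact ⟨t, hjt.lt_of_ne fun e ↦ hj (e ▸ htv), htv,
    fun i hi ↦ hmarked i ⟨(Nat.le_succ j).trans hi.1, hi.2⟩⟩

/-- The induction on `N` needs all three bounds: a visit to `A` counted at an unmarked time can make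
`alternationCount` miss one marked time before the next visit to `v`, but no more than one. -/
lemma count_marked_window_le_alternationCount [DecidablePred marked] (hv : v ∉ A)
    (hA : ∀ k, marked k → w k ∈ A)
    (hvisit : ∀ k, marked k → VisitsBeforeMark v w marked (k + 1)) (N j : ℕ) :
    Nat.count (fun k ↦ marked (j + k)) N ≤ alternationCount A v w false N j ∧
      Nat.count (fun k ↦ marked (j + k)) N ≤ alternationCount A v w true N j + 1 ∧
      (VisitsBeforeMark v w marked j →
        Nat.count (fun k ↦ marked (j + k)) N ≤ alternationCount A v w true N j) := by
  induction N generalizing j with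
  | zero => simp
  | succ N ih =>
    obtain ⟨hfree, hlate, hsafe⟩ := ih (j + 1)
    have hafter (hj : marked j) := hsafe (hvisit j hj)
    have hfalse : Nat.count (fun k ↦ marked (j + k)) (N + 1) ≤
        alternationCount A v w false (N + 1) j := by
      rw [count_window_succ]
      by_cases hj : w j ∈ A
      · rw [alternationCount_false_of_mem hj]
        split_ifs with hm
        · exact Nat.succ_le_succ (hafter hm)
        · exact hlate
      · rwa [alternationCount_false_of_notMem hj, if_neg (mt (hA j) hj)]
    refine ⟨hfalse, ?_⟩
    by_cases hj : w j = v
    · rw [alternationCount_true_of_eq hv hj]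
      exact ⟨hfalse.trans (Nat.le_succ _), fun _ ↦ hfalse⟩
    · rw [alternationCount_true_of_ne hj, count_window_succ]
      refine ⟨?_, fun h ↦ ?_⟩
      · split_ifs with hm
        · exact Nat.succ_le_succ (hafter hm)
        · exact hlate
      · rw [if_neg (h.not_marked hj)]
        exact hsafe (h.succ hj)

lemma count_marked_le_alternationCount [DecidablePred marked] (hv : v ∉ A)
    (hA : ∀ k, marked k → w k ∈ A)
    (hvisit : ∀ k, marked k → VisitsBeforeMark v w marked (k + 1)) (N : ℕ) :
    Nat.count marked N ≤ alternationCount A v w false N 0 := by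
  simpa only [Nat.zero_add] using (count_marked_window_le_alternationCount hv hA hvisit N 0).1

lemma visitsBeforeMark_of_pattern {u : S} {vs : ℕ → S} {l : ℕ} (hl : 1 ≤ l)
    (hvs : ∀ i, 1 ≤ i → i ≤ l - 1 → vs i ≠ u) (hmarked : ∀ k, marked k → w k = u) {k : ℕ}
    (hk : ∀ i, 1 ≤ i → i ≤ l - 1 → w (k + i) = vs i) (hkl : w (k + l) = v) :
    VisitsBeforeMark v w marked (k + 1) := by
  refine ⟨k + l, by omega, hkl, fun i ⟨hki, hil⟩ hi ↦ ?_⟩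
  obtain ⟨d, rfl⟩ := Nat.exists_eq_add_of_lt hki
  have hd : 1 ≤ d + 1 ∧ d + 1 ≤ l - 1 := by omega
  exact hvs (d + 1) hd.1 hd.2 ((hk (d + 1) hd.1 hd.2).symm.trans (hmarked _ hi))

end Deterministic

section Comparison

variable {S : Type*} [Countable S] [MeasurableSpace S] [MeasurableSingletonClass S]
  {A : Set S} {v : S} {P : S → S → ℝ≥0∞}
  {Ω : Type*} [MeasurableSpace Ω] {μ : Measure Ω} [IsFiniteMeasure μ] {X : ℕ → Ω → S}
  {Ω' : Type*} [MeasurableSpace Ω'] {μ' : Measure Ω'} [IsFiniteMeasure μ'] {Y : ℕ → Ω' → S}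

lemma measure_pathEvent_inter_visits_eq (hY : ∀ n, Measurable (Y n))
    (hYP : HasTransitionsOn μ' Y Aᶜ P) (hYA : HasTransitionsOn μ' Y A fun _ ↦ Pi.single v 1)
    (N m j : ℕ) (p : ℕ → S) :
    μ' (pathEvent Y j p ∩ {ω | m ≤ Nat.count (fun k ↦ Y (j + k) ω ∈ A) N}) =
      μ' (pathEvent Y j p) * auxVisitProb A v P N m (p j) := by
  induction N generalizing m j p with
  | zero => cases m <;> simp [auxVisitProb_zero_right, auxVisitProb_zero_succ]
  | succ N ih =>
    rcases m with _ | m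
    · simp [auxVisitProb_zero_right]
    by_cases hp : p j ∈ A
    · have hdirac : ∑' y, (Pi.single v 1 : S → ℝ≥0∞) y * auxVisitProb A v P N m y =
          auxVisitProb A v P N m v := by
        rw [tsum_eq_single v fun y hy ↦ by simp [hy]]
        simp
      rw [auxVisitProb_succ_of_mem hp, ← hdirac,
        ← hYA.measure_pathEvent_inter_eq_of_succ hY hp (ih m (j + 1))]
      refine congrArg μ' (pathEvent_inter_congr fun ω hω ↦ ?_)
      rw [count_window_succ (Y · ω ∈ A), if_pos (hω ▸ hp), Nat.add_le_add_iff_right]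
    · rw [auxVisitProb_succ_of_notMem hp,
        ← hYP.measure_pathEvent_inter_eq_of_succ hY hp (ih (m + 1) (j + 1))]
      refine congrArg μ' (pathEvent_inter_congr fun ω hω ↦ ?_)
      simp only [count_window_succ (Y · ω ∈ A), if_neg (hω ▸ hp), Nat.add_zero]

lemma measure_pathEvent_inter_alternationCount_le (hX : ∀ n, Measurable (X n))
    (hXP : HasTransitionsOn μ X Aᶜ P) (hv : v ∉ A) (N m j : ℕ) (p : ℕ → S) :
    μ (pathEvent X j p ∩ {ω | m ≤ alternationCount A v (X · ω) false N j}) ≤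
        μ (pathEvent X j p) * auxVisitProb A v P N m (p j) ∧
      μ (pathEvent X j p ∩ {ω | m ≤ alternationCount A v (X · ω) true N j}) ≤
        μ (pathEvent X j p) * auxVisitProb A v P N m v := by
  induction N generalizing m j p with
  | zero => cases m <;> simp [auxVisitProb_zero_right, alternationCount_zero]
  | succ N ih =>
    rcases m with _ | m
    · simp [auxVisitProb_zero_right]
    have hfalse : μ (pathEvent X j p ∩
          {ω | m + 1 ≤ alternationCount A v (X · ω) false (N + 1) j}) ≤
        μ (pathEvent X j p) * auxVisitProb A v P (N + 1) (m + 1) (p j) := by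
      by_cases hp : p j ∈ A
      · rw [auxVisitProb_succ_of_mem hp, pathEvent_inter_congr fun ω hω ↦ by
          rw [alternationCount_false_of_mem (hω ▸ hp), Nat.add_le_add_iff_right]]
        exact measure_pathEvent_inter_le_const_of_succ hX (fun q ↦ (ih m (j + 1) q).2) p
      · rw [auxVisitProb_succ_of_notMem hp, pathEvent_inter_congr fun ω hω ↦ by
          rw [alternationCount_false_of_notMem (hω ▸ hp)]]
        exact hXP.measure_pathEvent_inter_le_of_succ hX hp fun q ↦ (ih (m + 1) (j + 1) q).1
    refine ⟨hfalse, ?_⟩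
    by_cases hp : p j = v
    · rw [pathEvent_inter_congr fun ω hω ↦ by
        rw [alternationCount_true_of_eq hv (hω.trans hp)]]
      exact hp ▸ hfalse
    · rw [pathEvent_inter_congr fun ω hω ↦ by
        rw [alternationCount_true_of_ne (hω ▸ hp)]]
      refine (measure_pathEvent_inter_le_const_of_succ hX
        (fun q ↦ (ih (m + 1) (j + 1) q).2) p).trans ?_
      gcongr
      exact auxVisitProb_le_succ

theorem measure_le_alternationCount_le_measure_le_count_visits (hX : ∀ n, Measurable (X n))
    (hY : ∀ n, Measurable (Y n)) (hXP : HasTransitionsOn μ X Aᶜ P)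
    (hYP : HasTransitionsOn μ' Y Aᶜ P) (hYA : HasTransitionsOn μ' Y A fun _ ↦ Pi.single v 1)
    (h0 : Measure.map (Y 0) μ' = Measure.map (X 0) μ) (hv : v ∉ A) (m N : ℕ) :
    μ {ω | m ≤ alternationCount A v (X · ω) false N 0} ≤
      μ' {ω | m ≤ Nat.count (fun k ↦ Y k ω ∈ A) N} := by
  have hinit (x : S) : μ (pathEvent X 0 fun _ ↦ x) = μ' (pathEvent Y 0 fun _ ↦ x) := by
    have hx := congrArg (· {x}) h0
    simp only [Measure.map_apply (hX 0) (measurableSet_singleton x),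
      Measure.map_apply (hY 0) (measurableSet_singleton x)] at hx
    rw [pathEvent_zero, pathEvent_zero]
    exact hx.symm
  have hvisits (x : S) := measure_pathEvent_inter_visits_eq hY hYP hYA N m 0 fun _ ↦ x
  simp only [Nat.zero_add, pathEvent_zero] at hvisits hinit
  rw [measure_eq_tsum_fiber_inter (hX 0), measure_eq_tsum_fiber_inter (hY 0)]
  refine ENNReal.tsum_le_tsum fun x ↦ ?_
  rw [hvisits x, ← hinit x]
  simpa only [pathEvent_zero] using
    (measure_pathEvent_inter_alternationCount_le hX hXP hv N m 0 fun _ ↦ x).1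

theorem measure_le_count_marked_le_measure_le_count_visits (hX : ∀ n, Measurable (X n))
    (hY : ∀ n, Measurable (Y n)) (hXP : HasTransitionsOn μ X Aᶜ P)
    (hYP : HasTransitionsOn μ' Y Aᶜ P) (hYA : HasTransitionsOn μ' Y A fun _ ↦ Pi.single v 1)
    (h0 : Measure.map (Y 0) μ' = Measure.map (X 0) μ) (hv : v ∉ A) {marked : Ω → ℕ → Prop}
    -- Found by unification: synthesis need not return the instances in the counts it is applied to.
    {_ : ∀ ω, DecidablePred (marked ω)} (hA : ∀ ω k, marked ω k → X k ω ∈ A)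
    (hvisit : ∀ ω k, marked ω k → VisitsBeforeMark v (X · ω) (marked ω) (k + 1)) (m N : ℕ) :
    μ {ω | m ≤ Nat.count (marked ω) N} ≤ μ' {ω | m ≤ Nat.count (fun k ↦ Y k ω ∈ A) N} :=
  (measure_mono fun ω (hω : m ≤ Nat.count (marked ω) N) ↦
    hω.trans (count_marked_le_alternationCount hv (hA ω) (hvisit ω) N)).trans
    (measure_le_alternationCount_le_measure_le_count_visits hX hY hXP hYP hYA h0 hv m N)

theorem pattern_count_dominated_by_auxiliary_chain_general (hX : ∀ n, Measurable (X n))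
    (hY : ∀ n, Measurable (Y n)) (hXP : HasTransitionsOn μ X Aᶜ P)
    (hYP : HasTransitionsOn μ' Y Aᶜ P) (hYA : HasTransitionsOn μ' Y A fun _ ↦ Pi.single v 1)
    (h0 : Measure.map (Y 0) μ' = Measure.map (X 0) μ) (hv : v ∉ A) {u : S} (hu : u ∈ A)
    {l : ℕ} (hl : 1 ≤ l) {vs : ℕ → S} (hvs : ∀ i, 1 ≤ i → i ≤ l - 1 → vs i ≠ u)
    (c : ℝ) (n : ℕ) :
    μ {ω | c < (((Finset.range n).filter (fun k ↦ X k ω = u ∧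
          (∀ i, 1 ≤ i → i ≤ l - 1 → X (k + i) ω = vs i) ∧ X (k + l) ω = v)).card : ℝ)} ≤
      μ' {ω | c < (((Finset.range n).filter (fun k ↦ Y k ω ∈ A)).card : ℝ)} := by
  have hthreshold (r : ℕ) : c < (r : ℝ) ↔ (⌊c⌋ + 1).toNat ≤ r := by
    rw [Int.toNat_le, Int.add_one_le_iff, Int.floor_lt, Int.cast_natCast]
  simp only [hthreshold, ← Nat.count_eq_card_filter_range]
  refine measure_le_count_marked_le_measure_le_count_visits hX hY hXP hYP hYA h0 hv ?_ ?_ _ n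
  · rintro ω k ⟨hk, -⟩
    exact hk ▸ hu
  · rintro ω k ⟨-, hk, hkl⟩
    exact visitsBeforeMark_of_pattern hl hvs (fun _ ↦ And.left) hk hkl

end Comparison

/-- Let `X` be a standard random walk in `ℤ²` perturbed on a finite set
`A` (jumps `ξ` outside `A`, jumps `η^{(x)}` from `x ∈ A`), with `E[ξ] = 0`, `E[|ξ|²] < ∞`,
Condition B and `max_{x∈A} P{|η^{(x)}| > t} = o(1/log t)`. Fix `u ∈ A`, `v ∉ A`, `l ≥ 1`
and distinct `v₁, …, v_{l−1} ∈ A \ {u}`. Let `X̃` be the Markov chain with `X̃(0) ∼ X(0)`,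
the same transition probabilities as `X` from points outside `A`, and deterministic jumps
to `v` from every point of `A`. Then for all `c > 0` and all `n`,
`P{Σ_{k=0}^n 1{X(k)=u, X(k+1)=v₁, …, X(k+l−1)=v_{l−1}, X(k+l)=v} > c}
  ≤ P{Σ_{k=0}^n 1{X̃(k) ∈ A} > c}`. -/
theorem pattern_count_dominated_by_auxiliary_chain
    -- auxiliary probability space carrying the step variables `ξ` and `η^{(x)}`
    {Ω₀ : Type*} [MeasurableSpace Ω₀] (μ₀ : Measure Ω₀) [IsProbabilityMeasure μ₀]
    (ξ : Ω₀ → ℤ × ℤ) (η : ℤ × ℤ → Ω₀ → ℤ × ℤ)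
    (hξmeas : Measurable ξ) (hηmeas : ∀ x, Measurable (η x))
    (A : Finset (ℤ × ℤ))
    -- the chain `X`
    {Ω : Type*} [MeasurableSpace Ω] (μ : Measure Ω) [IsProbabilityMeasure μ]
    (X : ℕ → Ω → ℤ × ℤ) (hXmeas : ∀ n, Measurable (X n))
    (hXmarkov : ∀ (n : ℕ) (path : ℕ → ℤ × ℤ) (y : ℤ × ℤ),
      μ {ω | ∀ i ≤ n, X i ω = path i} ≠ 0 →
      μ[{ω | X (n + 1) ω = y} | {ω | ∀ i ≤ n, X i ω = path i}] =
        (if path n ∈ A then μ₀ {ω | η (path n) ω = y - path n}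
         else μ₀ {ω | ξ ω = y - path n}))
    -- the auxiliary chain `X̃`
    {Ω' : Type*} [MeasurableSpace Ω'] (μ' : Measure Ω') [IsProbabilityMeasure μ']
    (Y : ℕ → Ω' → ℤ × ℤ) (hYmeas : ∀ n, Measurable (Y n))
    (v : ℤ × ℤ) (hv : v ∉ A)
    (hY0 : Measure.map (Y 0) μ' = Measure.map (X 0) μ)
    (hYmarkov : ∀ (n : ℕ) (path : ℕ → ℤ × ℤ) (y : ℤ × ℤ),
      μ' {ω | ∀ i ≤ n, Y i ω = path i} ≠ 0 →
      μ'[{ω | Y (n + 1) ω = y} | {ω | ∀ i ≤ n, Y i ω = path i}] =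
        (if path n ∈ A then (if y = v then 1 else 0)
         else μ₀ {ω | ξ ω = y - path n}))
    -- `E[ξ] = (0,0)`
    (hmean1 : ∫ ω, ((ξ ω).1 : ℝ) ∂μ₀ = 0) (hmean2 : ∫ ω, ((ξ ω).2 : ℝ) ∂μ₀ = 0)
    -- `E[|ξ|²] < ∞`
    (hmom : Integrable (fun ω => nrm2 (ξ ω) ^ 2) μ₀)
    -- Condition B (i): the walk with step `ξ` is aperiodic
    (haper : ∀ H : AddSubgroup (ℤ × ℤ), (∀ z, μ₀ {ω | ξ ω = z} ≠ 0 → z ∈ H) → H = ⊤)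
    -- Condition B (ii): every point of `ℤ² \ A` is accessible for `X` from every point of `A`
    (hacc : ∀ a ∈ A, ∀ y : ℤ × ℤ, y ∉ A → ∃ (n : ℕ) (p : ℕ → ℤ × ℤ), p 0 = a ∧ p n = y ∧
      ∀ i < n, (if p i ∈ A then μ₀ {ω | η (p i) ω = p (i + 1) - p i}
        else μ₀ {ω | ξ ω = p (i + 1) - p i}) ≠ 0)
    -- `max_{x∈A} P{|η^{(x)}| > t} = o(1/log t)` as `t → ∞`
    (hηtail : ∀ x ∈ A, Tendsto
      (fun t : ℝ => Real.log t * (μ₀ {ω | t < nrm2 (η x ω)}).toReal) atTop (nhds 0))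
    -- the fixed pattern `u, v₁, …, v_{l−1}, v`
    (u : ℤ × ℤ) (hu : u ∈ A) (l : ℕ) (hl : 1 ≤ l) (vs : ℕ → ℤ × ℤ)
    (hvsA : ∀ i, 1 ≤ i → i ≤ l - 1 → vs i ∈ A ∧ vs i ≠ u)
    (hvsdist : ∀ i j, 1 ≤ i → i ≤ l - 1 → 1 ≤ j → j ≤ l - 1 → vs i = vs j → i = j) :
    ∀ c : ℝ, 0 < c → ∀ n : ℕ,
      μ {ω | c < (((Finset.range (n + 1)).filter (fun k =>
            X k ω = u ∧ (∀ i, 1 ≤ i → i ≤ l - 1 → X (k + i) ω = vs i) ∧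
              X (k + l) ω = v)).card : ℝ)} ≤
        μ' {ω | c < (((Finset.range (n + 1)).filter (fun k => Y k ω ∈ A)).card : ℝ)} := by
  intro c _ n
  convert pattern_count_dominated_by_auxiliary_chain_general (A := A)
    (P := fun x y ↦ μ₀ {ω | ξ ω = y - x}) hXmeas hYmeas
    (fun n p y hp h ↦ (hXmarkov n p y h).trans (if_neg hp))
    (fun n p y hp h ↦ (hYmarkov n p y h).trans (if_neg hp))
    (fun n p y hp h ↦ ((hYmarkov n p y h).trans (if_pos hp)).trans (by simp [Pi.single_apply]))
    hY0 hv hu hl (fun i h1 h2 ↦ (hvsA i h1 h2).2) c (n + 1)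
  exact Finset.mem_coe.symm
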